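/- Define φ on A = {(x₀,x₁,x₂,x₃) ∈ ℝ⁴ : (x₀,x₂,x₃) ≠ (0,0,0)} by φ(x₀,x₁,x₂,x₃) = −i·x₁ + √(x₀² + x₂² + x₃²). Then on A: x₀·(∑ᵢ₌₀³ ∂²φ/∂xᵢ²) − 2·∂φ/∂x₀ = 0 and ∑ᵢ₌₀³ (∂φ/∂xᵢ)² = 0. -/

import Mathlib

noncomputable section

/-- Partial derivative in the `i`-th coordinate direction of a map `ℝ⁴ → ℂ`;
coordinates on `ℝ⁴` are `(x₀, x₁, x₂, x₃)`. -/
def pd (i : Fin 4) (f : (Fin 4 → ℝ) → ℂ) (x : Fin 4 → ℝ) : ℂ :=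
  fderiv ℝ f x (Pi.single i 1)

/-- The map `φ = −i x₁ + √(x₀² + x₂² + x₃²)` of Example 13.8. -/
def phiSphere (x : Fin 4 → ℝ) : ℂ :=
  -Complex.I * (x 1 : ℂ) + (Real.sqrt (x 0 ^ 2 + x 2 ^ 2 + x 3 ^ 2) : ℂ)

/-!
In the cylindrical coordinates given by `x₁` and `r = √(x₀² + x₂² + x₃²)`, the map is `-i x₁ + r`.
The radius over `m` coordinates satisfies `|∇r|² = 1`, `Δr = (m - 1) / r` and `∂r/∂xᵢ = xᵢ / r`.
The linear term adds `(-i)² = -1` to the sum of squares of the partial derivatives and nothing to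
the Laplacian, so that the sum vanishes and `x₀ Δφ = (m - 1) x₀ / r = (m - 1) ∂φ/∂x₀`, with `m = 3`.
-/

open scoped Topology

/-- The `i`-th partial derivative `∂f/∂xᵢ` of a map `ℝ^ι → F`, encoded as `fderiv` on the `i`-th
basis vector; for `ι = Fin 4` and `F = ℂ` it is definitionally `pd`. -/
def partialDeriv {ι F : Type*} [Fintype ι] [DecidableEq ι] [NormedAddCommGroup F]
    [NormedSpace ℝ F] (i : ι) (f : (ι → ℝ) → F) (x : ι → ℝ) : F :=
  fderiv ℝ f x (Pi.single i 1)

/-- The Euclidean length `r` of the coordinates of `x` indexed by `s`, that is, the distance to the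
subspace on which these coordinates vanish. -/
def radiusOn {ι : Type*} (s : Finset ι) (x : ι → ℝ) : ℝ :=
  √(∑ i ∈ s, x i ^ 2)

/-- The map `-i xₐ + r`, with `r` the radius over the coordinates in `s`: the analogue of
`phiSphere` for any axis `a` and any number of coordinates. -/
def cylindricalMap {ι : Type*} (a : ι) (s : Finset ι) (x : ι → ℝ) : ℂ :=
  -Complex.I * x a + radiusOn s x

section RadiusOn

variable {ι : Type*} {s : Finset ι} {x : ι → ℝ}

lemma sq_radiusOn (s : Finset ι) (x : ι → ℝ) : radiusOn s x ^ 2 = ∑ i ∈ s, x i ^ 2 :=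
  Real.sq_sqrt (Finset.sum_nonneg fun i _ => sq_nonneg (x i))

lemma radiusOn_ne_zero_iff : radiusOn s x ≠ 0 ↔ ∃ i ∈ s, x i ≠ 0 := by
  rw [← pow_ne_zero_iff two_ne_zero, sq_radiusOn, Ne,
    Finset.sum_eq_zero_iff_of_nonneg fun i _ => sq_nonneg (x i)]
  simp

lemma contDiffAt_radiusOn [Fintype ι] {n : WithTop ℕ∞} (hr : radiusOn s x ≠ 0) :
    ContDiffAt ℝ n (radiusOn s) x := by
  refine ContDiffAt.sqrt (by fun_prop) ?_
  rw [← sq_radiusOn]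
  exact pow_ne_zero 2 hr

lemma hasFDerivAt_radiusOn [Finite ι] (hr : radiusOn s x ≠ 0) :
    HasFDerivAt (radiusOn s)
      ((radiusOn s x)⁻¹ • ∑ i ∈ s, x i • ContinuousLinearMap.proj (R := ℝ) (φ := fun _ : ι => ℝ) i)
      x := by
  cases nonempty_fintype ι
  have hsum := HasFDerivAt.fun_sum (u := s) fun i _ => (hasFDerivAt_apply (𝕜 := ℝ) i x).pow 2
  have hne : ∑ i ∈ s, x i ^ 2 ≠ 0 := sq_radiusOn s x ▸ pow_ne_zero 2 hr
  refine (hsum.sqrt hne).congr_fderiv ?_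
  rw [← radiusOn]
  ext v
  simp only [one_div, mul_inv_rev, Nat.add_one_sub_one, pow_one, nsmul_eq_mul, Nat.cast_ofNat,
    smul_apply, sum_apply, ContinuousLinearMap.proj_apply, smul_eq_mul, Finset.mul_sum]
  field_simp

variable [Fintype ι] [DecidableEq ι]

lemma partialDeriv_radiusOn (hr : radiusOn s x ≠ 0) (i : ι) :
    partialDeriv i (radiusOn s) x = if i ∈ s then x i / radiusOn s x else 0 := by
  rw [partialDeriv, (hasFDerivAt_radiusOn hr).fderiv]
  simp [Pi.single_apply, div_eq_inv_mul]

lemma partialDeriv_partialDeriv_radiusOn (hr : radiusOn s x ≠ 0) (i : ι) :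
    partialDeriv i (partialDeriv i (radiusOn s)) x =
      if i ∈ s then 1 / radiusOn s x - x i ^ 2 / radiusOn s x ^ 3 else 0 := by
  have hev : partialDeriv i (radiusOn s) =ᶠ[𝓝 x]
      fun y => if i ∈ s then y i / radiusOn s y else 0 :=
    ((contDiffAt_radiusOn (n := 0) hr).continuousAt.eventually_ne hr).mono
      fun y hy => partialDeriv_radiusOn hy i
  rw [partialDeriv, hev.fderiv_eq]
  split_ifs with hi
  · have hinv := (hasDerivAt_inv hr).comp_hasFDerivAt x (hasFDerivAt_radiusOn hr)
    have hdiv : HasFDerivAt (fun y => y i / radiusOn s y) _ x :=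
      (hasFDerivAt_apply (𝕜 := ℝ) i x).fun_mul hinv
    rw [hdiv.fderiv]
    simp only [neg_smul, smul_neg, add_apply, neg_apply, smul_apply, sum_apply,
      ContinuousLinearMap.proj_apply, Pi.single_apply, smul_eq_mul, mul_ite, mul_one, mul_zero,
      Finset.sum_ite_eq', hi, ↓reduceIte, one_div]
    field_simp
    ring
  · simp

lemma sum_sq_partialDeriv_radiusOn (hr : radiusOn s x ≠ 0) :
    ∑ i, partialDeriv i (radiusOn s) x ^ 2 = 1 := by
  calc ∑ i, partialDeriv i (radiusOn s) x ^ 2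
      = (∑ i ∈ s, x i ^ 2) / radiusOn s x ^ 2 := by
        simp [partialDeriv_radiusOn hr, ite_pow, div_pow, Finset.sum_div]
    _ = 1 := by rw [← sq_radiusOn, div_self (pow_ne_zero 2 hr)]

lemma sum_partialDeriv_partialDeriv_radiusOn (hr : radiusOn s x ≠ 0) :
    ∑ i, partialDeriv i (partialDeriv i (radiusOn s)) x = (s.card - 1) / radiusOn s x := by
  calc ∑ i, partialDeriv i (partialDeriv i (radiusOn s)) x
      = s.card / radiusOn s x - (∑ i ∈ s, x i ^ 2) / radiusOn s x ^ 3 := by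
        simp [partialDeriv_partialDeriv_radiusOn hr, Finset.sum_mul, div_eq_mul_inv]
    _ = (s.card - 1) / radiusOn s x := by
        rw [← sq_radiusOn]
        field_simp

end RadiusOn

lemma hasFDerivAt_ofReal_comp {E : Type*} [NormedAddCommGroup E] [NormedSpace ℝ E] {u : E → ℝ}
    {u' : E →L[ℝ] ℝ} {x : E} (hu : HasFDerivAt u u' x) :
    HasFDerivAt (fun y => (u y : ℂ)) (Complex.ofRealCLM.comp u') x :=
  Complex.ofRealCLM.hasFDerivAt.comp x hu

section NegIMulAdd

variable {ι : Type*} [Fintype ι] [DecidableEq ι] {u : (ι → ℝ) → ℝ} {x : ι → ℝ}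

lemma partialDeriv_neg_I_mul_add (a i : ι) (hu : DifferentiableAt ℝ u x) :
    partialDeriv i (fun y => -Complex.I * y a + u y) x =
      (if i = a then -Complex.I else 0) + (partialDeriv i u x : ℝ) := by
  have hlin := (hasFDerivAt_ofReal_comp (hasFDerivAt_apply a x)).const_mul (-Complex.I)
  have hsum := hlin.fun_add (hasFDerivAt_ofReal_comp hu.hasFDerivAt)
  rw [partialDeriv, hsum.fderiv]
  obtain rfl | hia := eq_or_ne i a <;> simp [partialDeriv, *]

lemma partialDeriv_partialDeriv_neg_I_mul_add (a i : ι) (hu : ContDiffAt ℝ 2 u x) :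
    partialDeriv i (partialDeriv i fun y => -Complex.I * y a + u y) x =
      (partialDeriv i (partialDeriv i u) x : ℝ) := by
  have hev : (partialDeriv i fun y => -Complex.I * y a + u y) =ᶠ[𝓝 x]
      fun y => (if i = a then -Complex.I else 0) + (partialDeriv i u y : ℝ) :=
    (hu.eventually (by simp)).mono
      fun y hy => partialDeriv_neg_I_mul_add a i (hy.differentiableAt two_ne_zero)
  have hdiff : DifferentiableAt ℝ (partialDeriv i u) x :=
    ((hu.fderiv_right (m := 1) le_rfl).differentiableAt one_ne_zero).clm_apply
      (differentiableAt_const _)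
  rw [partialDeriv, hev.fderiv_eq, fderiv_const_add,
    (hasFDerivAt_ofReal_comp hdiff.hasFDerivAt).fderiv]
  rfl

end NegIMulAdd

section CylindricalMap

variable {ι : Type*} [Fintype ι] [DecidableEq ι] {a k : ι} {s : Finset ι} {x : ι → ℝ}

lemma partialDeriv_cylindricalMap (a i : ι) (hr : radiusOn s x ≠ 0) :
    partialDeriv i (cylindricalMap a s) x =
      (if i = a then -Complex.I else 0) + (partialDeriv i (radiusOn s) x : ℝ) :=
  partialDeriv_neg_I_mul_add a i ((contDiffAt_radiusOn hr).differentiableAt one_ne_zero)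

lemma sum_sq_partialDeriv_cylindricalMap (ha : a ∉ s) (hr : radiusOn s x ≠ 0) :
    ∑ i, partialDeriv i (cylindricalMap a s) x ^ 2 = 0 := by
  have hsq (i : ι) : partialDeriv i (cylindricalMap a s) x ^ 2 =
      (if i = a then -1 else 0) + (partialDeriv i (radiusOn s) x ^ 2 : ℝ) := by
    rw [partialDeriv_cylindricalMap a i hr]
    obtain rfl | hia := eq_or_ne i a
    · simp [partialDeriv_radiusOn hr, ha]
    · simp [hia]
  calc ∑ i, partialDeriv i (cylindricalMap a s) x ^ 2
      = -1 + (∑ i, partialDeriv i (radiusOn s) x ^ 2 : ℝ) := by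
        simp [hsq, Finset.sum_add_distrib]
    _ = 0 := by simp [sum_sq_partialDeriv_radiusOn hr]

lemma sum_partialDeriv_partialDeriv_cylindricalMap (a : ι) (hr : radiusOn s x ≠ 0) :
    ∑ i, partialDeriv i (partialDeriv i (cylindricalMap a s)) x =
      (s.card - 1) / radiusOn s x := by
  have hsecond (i : ι) : partialDeriv i (partialDeriv i (cylindricalMap a s)) x =
      (partialDeriv i (partialDeriv i (radiusOn s)) x : ℝ) :=
    partialDeriv_partialDeriv_neg_I_mul_add a i (contDiffAt_radiusOn hr)
  simp_rw [hsecond]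
  exact_mod_cast sum_partialDeriv_partialDeriv_radiusOn hr

-- For `s = {a}ᶜ` these are the harmonic morphism equations of hyperbolic `(s.card + 1)`-space.
theorem phiSphere_hyperbolic_harmonic_morphism_general (ha : a ∉ s) (hk : k ∈ s)
    (hx : ∃ i ∈ s, x i ≠ 0) :
    (x k * ∑ i, partialDeriv i (partialDeriv i (cylindricalMap a s)) x -
        (s.card - 1) * partialDeriv k (cylindricalMap a s) x = 0) ∧
      ∑ i, partialDeriv i (cylindricalMap a s) x ^ 2 = 0 := by
  have hr : radiusOn s x ≠ 0 := radiusOn_ne_zero_iff.2 hx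
  refine ⟨?_, sum_sq_partialDeriv_cylindricalMap ha hr⟩
  have hfirst : partialDeriv k (cylindricalMap a s) x = x k / radiusOn s x := by
    simp [partialDeriv_cylindricalMap a k hr, partialDeriv_radiusOn hr, hk,
      ne_of_mem_of_not_mem hk ha]
  rw [sum_partialDeriv_partialDeriv_cylindricalMap a hr, hfirst]
  ring

end CylindricalMap

lemma phiSphere_eq_cylindricalMap : phiSphere = cylindricalMap 1 {0, 2, 3} := by
  ext x
  simp [phiSphere, cylindricalMap, radiusOn, add_assoc]

lemma pd_eq_partialDeriv (i : Fin 4) : pd i = partialDeriv i := rfl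

/-- Example 13.8: `φ = −i x₁ + √(x₀² + x₂² + x₃²)` satisfies the hyperbolic harmonic
morphism equations `x₀·∑ᵢ ∂²φ/∂xᵢ² − 2∂φ/∂x₀ = 0` and `∑ᵢ (∂φ/∂xᵢ)² = 0` on
`{(x₀,x₂,x₃) ≠ (0,0,0)}`. -/
theorem phiSphere_hyperbolic_harmonic_morphism :
    ∀ x : Fin 4 → ℝ, ¬(x 0 = 0 ∧ x 2 = 0 ∧ x 3 = 0) →
      ((x 0 : ℂ) * (∑ i : Fin 4, pd i (pd i phiSphere) x) - 2 * pd 0 phiSphere x = 0) ∧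
      (∑ i : Fin 4, (pd i phiSphere x) ^ 2 = 0) := by
  intro x hx
  have hx' : ∃ i ∈ ({0, 2, 3} : Finset (Fin 4)), x i ≠ 0 := by
    simpa [imp_iff_not_or] using hx
  have hcard : (({0, 2, 3} : Finset (Fin 4)).card : ℂ) - 1 = 2 := by
    norm_num [show ({0, 2, 3} : Finset (Fin 4)).card = 3 from rfl]
  simpa only [pd_eq_partialDeriv, phiSphere_eq_cylindricalMap, hcard] using
    phiSphere_hyperbolic_harmonic_morphism_general (a := 1) (k := 0) (by decide) (by decide) hx'

end
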